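/- arXiv:1511.06230 — 2 statements merged into one kernel-verified Lean document; each statement's English description precedes it below -/
import Mathlib

section
/- If μ is an integer with μ ≥ s^{ν−1}, then Z(H, μ, μ) = #{ α ∈ ℤ : α ∈ ⋃_{v=1}^{μ−1} (−v + H) and α ∉ H } = g + μ − 1, where g = #(ℕ \ H) is the number of gaps of H. -/
/-- The set `S^i` of the description of the Weierstrass semigroup `H(Q_ν)` of the
ν-th function field of the Garcia–Stichtenoth tower over `𝔽_q`, `q = s^2`. -/
def Sset (s ν i : ℕ) : Set ℕ :=
  if i = 0 then {0}
  else {x | ∃ k, 1 ≤ k ∧ k ≤ s ^ i - s ^ (i - 1) ∧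
        x = s ^ ν - s ^ (ν - i + 1) + k * s ^ (ν - 2 * i + 1)}

/-- The set `S^∞ = {n : n ≥ c + 1}` where `c = s^ν - s^(ν/2)` is the conductor. -/
def Sinf (s ν : ℕ) : Set ℕ := {n | s ^ ν - s ^ (ν / 2) + 1 ≤ n}

/-- The Weierstrass semigroup `H = S^0 ∪ S^1 ∪ ⋯ ∪ S^(ν/2) ∪ S^∞ ⊆ ℕ`. -/
def Hsemi (s ν : ℕ) : Set ℕ := (⋃ i ≤ ν / 2, Sset s ν i) ∪ Sinf s ν

/-- The semigroup `H` viewed as a subset of `ℤ`. -/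
def HZ (s ν : ℕ) : Set ℤ := (fun n : ℕ => (n : ℤ)) '' Hsemi s ν

/-!
A negative `α` lies in some `-v + H` with `1 ≤ v ≤ μ - 1` exactly when `α ≥ -(μ - 1)`, because
`0 ∈ H ⊆ ℕ`; this contributes `μ - 1` elements. A nonnegative `α` outside `H` is a gap of `H`. Every
multiple of `m = s ^ (ν - 1)` lies in `H`: those below `s ^ ν` form `S^0 ∪ S^1`, the others exceed
the conductor. Hence each gap is followed by an element of `H` at distance less than `m ≤ μ`, and
all `g` gaps are counted.
-/

section ShiftGaps

variable {H : Set ℕ} {μ n : ℕ}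

/-- The set `⋃_{v=1}^{μ-1} (-v + H) \ H ⊆ ℤ` whose cardinality is `Z(H, μ, μ)`, for an arbitrary
set `H` of natural numbers. -/
def shiftGaps (H : Set ℕ) (μ : ℕ) : Set ℤ :=
  {α | (∃ v : ℕ, 1 ≤ v ∧ v ≤ μ - 1 ∧ ∃ h ∈ H, α = -(v : ℤ) + (h : ℤ)) ∧
    α ∉ (fun n : ℕ => (n : ℤ)) '' H}

theorem natCast_mem_shiftGaps_iff :
    (n : ℤ) ∈ shiftGaps H μ ↔ n ∉ H ∧ ∃ v, 1 ≤ v ∧ v ≤ μ - 1 ∧ n + v ∈ H := by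
  have mem_shift_iff (v : ℕ) : (∃ h ∈ H, (n : ℤ) = -(v : ℤ) + (h : ℤ)) ↔ n + v ∈ H := by
    constructor
    · rintro ⟨h, hh, hnh⟩
      rwa [show n + v = h by lia]
    · exact fun h ↦ ⟨n + v, h, by lia⟩
  simp only [shiftGaps, Set.mem_ofPred_eq, mem_shift_iff, Nat.cast_injective.mem_set_image]
  exact and_comm

theorem mem_shiftGaps_iff_of_neg (zero_mem : 0 ∈ H) {α : ℤ} (hα : α < 0) :
    α ∈ shiftGaps H μ ↔ -((μ : ℤ) - 1) ≤ α := by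
  constructor
  · rintro ⟨⟨v, -, hv, h, -, rfl⟩, -⟩
    lia
  · refine fun h ↦ ⟨⟨α.natAbs, by lia, by lia, 0, zero_mem, by lia⟩, ?_⟩
    rintro ⟨n, -, rfl⟩
    lia

theorem exists_add_mem_of_forall_mul_mem {m : ℕ} (hm : 0 < m) (mul_mem : ∀ k, k * m ∈ H)
    (hn : n ∉ H) :
    ∃ v, 1 ≤ v ∧ v ≤ m - 1 ∧ n + v ∈ H := by
  have mod_pos : 0 < n % m := by
    refine Nat.pos_of_ne_zero fun h ↦ hn ?_
    simpa only [Nat.div_mul_cancel (Nat.dvd_of_mod_eq_zero h)] using mul_mem (n / m)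
  have mod_lt : n % m < m := Nat.mod_lt n hm
  have next_multiple : n + (m - n % m) = (n / m + 1) * m := by
    have := Nat.div_add_mod' n m
    lia
  exact ⟨m - n % m, by lia, by lia, next_multiple ▸ mul_mem _⟩

theorem shiftGaps_eq_union (zero_mem : 0 ∈ H)
    (exists_add_mem : ∀ n ∉ H, ∃ v, 1 ≤ v ∧ v ≤ μ - 1 ∧ n + v ∈ H) :
    shiftGaps H μ = (fun n : ℕ => (n : ℤ)) '' Hᶜ ∪ Set.Ico (-((μ : ℤ) - 1)) 0 := by
  ext α
  rcases lt_or_ge α 0 with hα | hα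
  · have not_mem_image : α ∉ (fun n : ℕ => (n : ℤ)) '' Hᶜ := by
      rintro ⟨n, -, rfl⟩
      lia
    simp only [mem_shiftGaps_iff_of_neg zero_mem hα, Set.mem_union, not_mem_image, false_or,
      Set.mem_Ico, hα, and_true]
  · lift α to ℕ using hα
    have not_mem_Ico : (α : ℤ) ∉ Set.Ico (-((μ : ℤ) - 1)) 0 := fun h ↦ h.2.not_ge α.cast_nonneg
    simp only [natCast_mem_shiftGaps_iff, Set.mem_union, not_mem_Ico, or_false,
      Nat.cast_injective.mem_set_image, Set.mem_compl_iff]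
    exact and_iff_left_of_imp (exists_add_mem α)

theorem ncard_shiftGaps (hμ : 0 < μ) (finite_compl : Hᶜ.Finite) (zero_mem : 0 ∈ H)
    (exists_add_mem : ∀ n ∉ H, ∃ v, 1 ≤ v ∧ v ≤ μ - 1 ∧ n + v ∈ H) :
    (shiftGaps H μ).ncard = Hᶜ.ncard + μ - 1 := by
  have disjoint : Disjoint ((fun n : ℕ => (n : ℤ)) '' Hᶜ) (Set.Ico (-((μ : ℤ) - 1)) 0) := by
    rw [Set.disjoint_left]
    rintro _ ⟨n, -, rfl⟩ ⟨-, hn⟩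
    lia
  have ncard_Ico : (Set.Ico (-((μ : ℤ) - 1)) 0).ncard = μ - 1 := by
    rw [← Finset.coe_Ico, Set.ncard_coe_finset, Int.card_Ico]
    lia
  rw [shiftGaps_eq_union zero_mem exists_add_mem,
    Set.ncard_union_eq disjoint (finite_compl.image _) (Set.finite_Ico _ _),
    Set.ncard_image_of_injective _ Nat.cast_injective, ncard_Ico, Nat.add_sub_assoc hμ]

end ShiftGaps

section Hsemi

variable {s ν : ℕ}

variable (s ν) in
theorem finite_compl_Hsemi : (Hsemi s ν)ᶜ.Finite := by
  refine (Set.finite_lt_nat (s ^ ν - s ^ (ν / 2) + 1)).subset fun n hn ↦ ?_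
  have not_conductor_lt : ¬ s ^ ν - s ^ (ν / 2) + 1 ≤ n := fun h ↦ hn (Or.inr h)
  exact not_le.mp not_conductor_lt

theorem mem_Hsemi_of_mem_Sset {i x : ℕ} (hi : i ≤ ν / 2) (hx : x ∈ Sset s ν i) :
    x ∈ Hsemi s ν :=
  Or.inl (Set.mem_biUnion hi hx)

variable (s ν) in
theorem zero_mem_Hsemi : 0 ∈ Hsemi s ν :=
  mem_Hsemi_of_mem_Sset (Nat.zero_le _) (by simp [Sset])

theorem mul_pow_mem_Sset_one (hν : 2 ≤ ν) {k : ℕ} (hk : 0 < k) (hks : k < s) :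
    k * s ^ (ν - 1) ∈ Sset s ν 1 := by
  refine ⟨k, hk, by simpa using Nat.le_sub_one_of_lt hks, ?_⟩
  rw [Nat.sub_add_cancel (by lia), Nat.sub_self, zero_add, show ν - 2 * 1 + 1 = ν - 1 by lia]

theorem mul_pow_mem_Sinf (hs : 0 < s) (hν : 0 < ν) {k : ℕ} (hsk : s ≤ k) :
    k * s ^ (ν - 1) ∈ Sinf s ν := by
  have pow_le : s ^ ν ≤ k * s ^ (ν - 1) := by
    rw [← mul_pow_sub_one hν.ne' s]
    exact Nat.mul_le_mul_right _ hsk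
  have conductor_lt : s ^ ν - s ^ (ν / 2) < s ^ ν := Nat.sub_lt (by positivity) (by positivity)
  exact conductor_lt.trans_le pow_le

theorem mul_pow_mem_Hsemi (hs : 0 < s) (hν : 2 ≤ ν) (k : ℕ) : k * s ^ (ν - 1) ∈ Hsemi s ν := by
  rcases k.eq_zero_or_pos with rfl | hk
  · simpa only [zero_mul] using zero_mem_Hsemi s ν
  rcases lt_or_ge k s with hks | hsk
  · exact mem_Hsemi_of_mem_Sset (by lia) (mul_pow_mem_Sset_one hν hk hks)
  · exact Or.inr (mul_pow_mem_Sinf hs (by lia) hsk)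

end Hsemi

theorem stmt10_general {s ν μ : ℕ} (hs : 0 < s) (hν : 2 ≤ ν) (hμ : s ^ (ν - 1) ≤ μ) :
    {α : ℤ | (∃ v : ℕ, 1 ≤ v ∧ v ≤ μ - 1 ∧ ∃ h ∈ Hsemi s ν, α = -(v : ℤ) + (h : ℤ)) ∧
        α ∉ HZ s ν}.ncard
      = {n : ℕ | n ∉ Hsemi s ν}.ncard + μ - 1 := by
  have pow_pos : 0 < s ^ (ν - 1) := by positivity
  refine ncard_shiftGaps (pow_pos.trans_le hμ) (finite_compl_Hsemi s ν) (zero_mem_Hsemi s ν) ?_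
  intro n hn
  obtain ⟨v, one_le, v_le, add_mem⟩ :=
    exists_add_mem_of_forall_mul_mem pow_pos (mul_pow_mem_Hsemi hs hν) hn
  exact ⟨v, one_le, v_le.trans (Nat.sub_le_sub_right hμ 1), add_mem⟩

/-- If `μ ≥ s^(ν-1)` then `Z(H, μ, μ) = #{α ∈ ⋃_{v=1}^{μ-1}(-v + H) : α ∉ H}`
equals `g + μ - 1`, where `g = #(ℕ \ H)` is the number of gaps of `H`. -/
theorem stmt10 (s ν : ℕ) (hs : 2 ≤ s) (hν : Even ν) (hν0 : 0 < ν)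
    (μ : ℕ) (hμ : s ^ (ν - 1) ≤ μ) :
    {α : ℤ | (∃ v : ℕ, 1 ≤ v ∧ v ≤ μ - 1 ∧ ∃ h ∈ Hsemi s ν, α = -(v : ℤ) + (h : ℤ)) ∧
        α ∉ HZ s ν}.ncard
      = {n : ℕ | n ∉ Hsemi s ν}.ncard + μ - 1 :=
  stmt10_general (by lia) (Nat.le_of_dvd hν0 hν.two_dvd) hμ
end

section
/- Let u be an integer with 0 ≤ u ≤ ν/2, let A^0(u) = S^0 ∪ S^1 ∪ ⋯ ∪ S^{ν/2−u}, and let t_1 < t_2 < ⋯ < t_{m−1} be integers with −s^{2u+1} < t_1 and t_{m−1} ≤ −1. Then the translates t_1 + A^0(u), …, t_{m−1} + A^0(u) are pairwise disjoint, each of them is disjoint from H, and consequently the union ⋃_{v=1}^{m−1} (t_v + A^0(u)) has exactly (m−1)·s^{ν/2−u} elements, none of which lies in H. -/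
/-- The set `A^0(u) = S^0 ∪ S^1 ∪ ⋯ ∪ S^(ν/2 - u)`, viewed inside `ℤ`. -/
def A0 (s ν u : ℕ) : Set ℤ := (fun n : ℕ => (n : ℤ)) '' (⋃ r ≤ ν / 2 - u, Sset s ν r)

/-!
For `i ≥ 1` the block `S^i` lies in the interval `(s^ν - s^(ν-i+1), s^ν - s^(ν-i)]`, so the blocks
follow one another without overlap, and `S^0 ∪ ⋯ ∪ S^n` is the part of `H` up to `s^ν - s^(ν-n)`.
For `n = ν/2 - u` all elements of this part are multiples of `d = s^(2u+1)`. If `-d < t < 0` and `a`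
belongs to it, an element `t + a` of `H` would be smaller than `a`, hence again in this part and a
multiple of `d`, which is impossible because `d ∤ t`. Translates by distinct elements of `(-d, 0)`
are disjoint because these elements are incongruent modulo `d`.
-/

theorem eq_of_add_eq_add_of_dvd {d t t' a a' : ℤ} (ha : d ∣ a) (ha' : d ∣ a')
    (ht : |t - t'| < d) (h : t + a = t' + a') : t = t' := by
  have hsub : t - t' = a' - a := by linarith
  have hdvd : d ∣ t - t' := hsub ▸ dvd_sub ha' ha
  exact sub_eq_zero.1 (Int.eq_zero_of_abs_lt_dvd hdvd ht)

theorem ncard_biUnion_image_of_pairwiseDisjoint {α β γ : Type*} {f : α → β → γ} {I : Set α}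
    {A : Set β} (hf : ∀ a ∈ I, Function.Injective (f a))
    (hdisj : I.PairwiseDisjoint fun a => f a '' A) :
    (⋃ a ∈ I, f a '' A).ncard = I.ncard * A.ncard := by
  rw [Set.iUnion_image_left, ← Set.image_prod,
    ((Set.pairwiseDisjoint_image_right_iff hf).1 hdisj).ncard_image, Set.ncard_prod]

section Blocks

variable {s ν i n x : ℕ}

theorem Sset_zero (s ν : ℕ) : Sset s ν 0 = {0} :=
  if_pos rfl

theorem mem_Sset (hi0 : i ≠ 0) :
    x ∈ Sset s ν i ↔ ∃ k, 1 ≤ k ∧ k ≤ s ^ i - s ^ (i - 1) ∧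
      x = s ^ ν - s ^ (ν - i + 1) + k * s ^ (ν - 2 * i + 1) := by
  rw [Sset, if_neg hi0]
  rfl

theorem Sset_eq_image (hi0 : i ≠ 0) :
    Sset s ν i = (fun k => s ^ ν - s ^ (ν - i + 1) + k * s ^ (ν - 2 * i + 1)) ''
      Set.Icc 1 (s ^ i - s ^ (i - 1)) := by
  ext x
  simp only [mem_Sset hi0, Set.mem_image, Set.mem_Icc, and_assoc, eq_comm]

theorem pow_dvd_of_mem_Sset (hi : 2 * i ≤ ν) (hx : x ∈ Sset s ν i) :
    s ^ (ν - 2 * i + 1) ∣ x := by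
  obtain rfl | hi0 := eq_or_ne i 0
  · rw [Sset_zero, Set.mem_singleton_iff] at hx
    exact hx ▸ dvd_zero (s ^ (ν - 2 * 0 + 1))
  · obtain ⟨k, -, -, rfl⟩ := (mem_Sset hi0).1 hx
    exact dvd_add (Nat.dvd_sub (pow_dvd_pow s (by omega)) (pow_dvd_pow s (by omega)))
      (dvd_mul_left _ k)

theorem lt_add_pow_of_mem_Sset (hs : 0 < s) (hi0 : i ≠ 0) (hx : x ∈ Sset s ν i) :
    s ^ ν < x + s ^ (ν - i + 1) := by
  obtain ⟨k, hk, -, rfl⟩ := (mem_Sset hi0).1 hx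
  have hpos : 0 < k * s ^ (ν - 2 * i + 1) := by positivity
  omega

theorem add_pow_le_of_mem_Sset (hs : 0 < s) (hi : 2 * i ≤ ν) (hx : x ∈ Sset s ν i) :
    x + s ^ (ν - i) ≤ s ^ ν := by
  obtain rfl | hi0 := eq_or_ne i 0
  · rw [Sset_zero, Set.mem_singleton_iff] at hx
    rw [hx, zero_add, Nat.sub_zero]
  · obtain ⟨k, -, hk, rfl⟩ := (mem_Sset hi0).1 hx
    have hstep : s ^ (i - 1) ≤ s ^ i := Nat.pow_le_pow_right hs (by omega)
    have hblock : s ^ (ν - i + 1) ≤ s ^ ν := Nat.pow_le_pow_right hs (by omega)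
    have hlast : k * s ^ (ν - 2 * i + 1) + s ^ (ν - i) ≤ s ^ (ν - i + 1) :=
      calc k * s ^ (ν - 2 * i + 1) + s ^ (ν - i)
          = (k + s ^ (i - 1)) * s ^ (ν - 2 * i + 1) := by
            rw [add_mul, ← pow_add, show i - 1 + (ν - 2 * i + 1) = ν - i by omega]
        _ ≤ s ^ i * s ^ (ν - 2 * i + 1) := Nat.mul_le_mul_right _ (by omega)
        _ = s ^ (ν - i + 1) := by
            rw [← pow_add, show i + (ν - 2 * i + 1) = ν - i + 1 by omega]
    omega

theorem finite_Sset (s ν i : ℕ) : (Sset s ν i).Finite := by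
  obtain rfl | hi0 := eq_or_ne i 0
  · exact Sset_zero s ν ▸ Set.finite_singleton 0
  · exact Sset_eq_image hi0 ▸ (Set.finite_Icc _ _).image _

theorem ncard_Sset (hs : 0 < s) (hi0 : i ≠ 0) : (Sset s ν i).ncard = s ^ i - s ^ (i - 1) := by
  have hinj : Function.Injective
      fun k => s ^ ν - s ^ (ν - i + 1) + k * s ^ (ν - 2 * i + 1) := fun _ _ h =>
    Nat.eq_of_mul_eq_mul_right (by positivity) (Nat.add_left_cancel h)
  rw [Sset_eq_image hi0, Set.ncard_image_of_injective _ hinj, Set.ncard_Icc_nat,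
    Nat.add_sub_cancel]

theorem pow_dvd_of_mem_accumulate_Sset (hn : 2 * n ≤ ν)
    (hx : x ∈ Set.accumulate (Sset s ν) n) : s ^ (ν - 2 * n + 1) ∣ x := by
  obtain ⟨i, hi, hx⟩ := Set.mem_accumulate.1 hx
  exact (pow_dvd_pow s (by omega)).trans (pow_dvd_of_mem_Sset (by omega) hx)

theorem add_pow_le_of_mem_accumulate_Sset (hs : 0 < s) (hn : 2 * n ≤ ν)
    (hx : x ∈ Set.accumulate (Sset s ν) n) : x + s ^ (ν - n) ≤ s ^ ν := by
  obtain ⟨i, hi, hx⟩ := Set.mem_accumulate.1 hx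
  calc x + s ^ (ν - n) ≤ x + s ^ (ν - i) := by gcongr
    _ ≤ s ^ ν := add_pow_le_of_mem_Sset hs (by omega) hx

theorem mem_accumulate_Sset_of_mem_Hsemi (hs : 0 < s) (hn : 2 * n ≤ ν) (hx : x ∈ Hsemi s ν)
    (hle : x + s ^ (ν - n) ≤ s ^ ν) : x ∈ Set.accumulate (Sset s ν) n := by
  rcases hx with hx | (hx : s ^ ν - s ^ (ν / 2) + 1 ≤ x)
  · obtain ⟨i, (hi : i ≤ ν / 2), hx⟩ := Set.mem_accumulate.1 hx
    refine Set.mem_accumulate.2 ⟨i, ?_, hx⟩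
    by_contra! hni
    have hlt := lt_add_pow_of_mem_Sset hs (Nat.ne_zero_of_lt hni) hx
    have hpow : s ^ (ν - i + 1) ≤ s ^ (ν - n) := Nat.pow_le_pow_right hs (by omega)
    omega
  · have hpow : s ^ (ν / 2) ≤ s ^ (ν - n) := Nat.pow_le_pow_right hs (by omega)
    omega

theorem disjoint_accumulate_Sset_succ (hs : 0 < s) (hn : 2 * (n + 1) ≤ ν) :
    Disjoint (Set.accumulate (Sset s ν) n) (Sset s ν (n + 1)) := by
  refine Set.disjoint_left.2 fun x hx hx' => ?_
  have hle := add_pow_le_of_mem_accumulate_Sset hs (by omega) hx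
  have hlt := lt_add_pow_of_mem_Sset hs n.succ_ne_zero hx'
  rw [show ν - (n + 1) + 1 = ν - n by omega] at hlt
  omega

theorem ncard_accumulate_Sset (hs : 0 < s) (hn : 2 * n ≤ ν) :
    (Set.accumulate (Sset s ν) n).ncard = s ^ n := by
  induction n with
  | zero => simp [Set.accumulate_zero_nat, Sset_zero]
  | succ n ih =>
    have hfin : (Set.accumulate (Sset s ν) n).Finite :=
      (Set.finite_Iic n).biUnion fun i _ => finite_Sset s ν i
    have hpow : s ^ n ≤ s ^ (n + 1) := Nat.pow_le_pow_right hs n.le_succ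
    rw [Set.accumulate_succ, Set.ncard_union_eq (disjoint_accumulate_Sset_succ hs hn) hfin
      (finite_Sset s ν (n + 1)), ih (by omega), ncard_Sset hs n.succ_ne_zero,
      Nat.succ_sub_one, Nat.add_sub_cancel' hpow]

end Blocks

section Translates

variable {s ν u : ℕ}

theorem ncard_A0 (hs : 0 < s) : (A0 s ν u).ncard = s ^ (ν / 2 - u) :=
  (Set.ncard_image_of_injective _ Nat.cast_injective).trans
    (ncard_accumulate_Sset hs (by omega))

theorem pow_dvd_of_mem_A0 (hu : u ≤ ν / 2) {a : ℤ} (ha : a ∈ A0 s ν u) :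
    (s ^ (2 * u + 1) : ℤ) ∣ a := by
  obtain ⟨x, hx, (rfl : (x : ℤ) = a)⟩ := ha
  have hdvd : s ^ (2 * u + 1) ∣ x :=
    (pow_dvd_pow s (by omega)).trans (pow_dvd_of_mem_accumulate_Sset (by omega) hx)
  exact_mod_cast hdvd

theorem mem_A0_of_mem_HZ_of_le (hs : 0 < s) {a b : ℤ} (ha : a ∈ A0 s ν u) (hb : b ∈ HZ s ν)
    (hba : b ≤ a) : b ∈ A0 s ν u := by
  obtain ⟨x, hx, (rfl : (x : ℤ) = a)⟩ := ha
  obtain ⟨y, hy, (rfl : (y : ℤ) = b)⟩ := hb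
  have hle := add_pow_le_of_mem_accumulate_Sset hs (by omega) hx
  exact ⟨y, mem_accumulate_Sset_of_mem_Hsemi hs (by omega) hy (by omega), rfl⟩

theorem disjoint_translate_A0_HZ (hs : 0 < s) (hu : u ≤ ν / 2) {t : ℤ}
    (hlt : -(s ^ (2 * u + 1) : ℤ) < t) (hneg : t < 0) :
    Disjoint ((fun x : ℤ => t + x) '' A0 s ν u) (HZ s ν) := by
  refine Set.disjoint_left.2 ?_
  rintro _ ⟨a, ha, rfl⟩ hH
  have hmem : t + a ∈ A0 s ν u := mem_A0_of_mem_HZ_of_le hs ha hH (by linarith)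
  have habs : |t - 0| < (s ^ (2 * u + 1) : ℤ) := abs_lt.2 ⟨by linarith, by linarith⟩
  exact hneg.ne (eq_of_add_eq_add_of_dvd (pow_dvd_of_mem_A0 hu ha)
    (pow_dvd_of_mem_A0 hu hmem) habs (zero_add _).symm)

theorem pairwiseDisjoint_translate_A0 (hu : u ≤ ν / 2) {ι : Type*} {I : Set ι} {t : ι → ℤ}
    (hinj : I.InjOn t) (hbd : ∀ v ∈ I, -(s ^ (2 * u + 1) : ℤ) < t v ∧ t v ≤ -1) :
    I.PairwiseDisjoint fun v => (fun x : ℤ => t v + x) '' A0 s ν u := by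
  refine fun v hv w hw hvw => Set.disjoint_left.2 ?_
  rintro _ ⟨a, ha, rfl⟩ ⟨b, hb, hab⟩
  have habs : |t v - t w| < (s ^ (2 * u + 1) : ℤ) :=
    abs_lt.2 ⟨by linarith [hbd v hv, hbd w hw], by linarith [hbd v hv, hbd w hw]⟩
  exact hvw (hinj hv hw (eq_of_add_eq_add_of_dvd (pow_dvd_of_mem_A0 hu ha)
    (pow_dvd_of_mem_A0 hu hb) habs hab.symm))

end Translates

theorem stmt11_general {s ν u : ℕ} (hs : 0 < s) (hu : u ≤ ν / 2) {ι : Type*} {I : Set ι}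
    {t : ι → ℤ} (hinj : I.InjOn t)
    (hbd : ∀ v ∈ I, -(s ^ (2 * u + 1) : ℤ) < t v ∧ t v ≤ -1) :
    (I.PairwiseDisjoint fun v => (fun x : ℤ => t v + x) '' A0 s ν u) ∧
    (∀ v ∈ I, Disjoint ((fun x : ℤ => t v + x) '' A0 s ν u) (HZ s ν)) ∧
    (⋃ v ∈ I, (fun x : ℤ => t v + x) '' A0 s ν u).ncard = I.ncard * s ^ (ν / 2 - u) := by
  have hdisj := pairwiseDisjoint_translate_A0 (ν := ν) hu hinj hbd
  refine ⟨hdisj, fun v hv => ?_, ?_⟩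
  · exact disjoint_translate_A0_HZ hs hu (hbd v hv).1 (by linarith [hbd v hv])
  · rw [ncard_biUnion_image_of_pairwiseDisjoint (fun v _ => add_right_injective (t v)) hdisj,
      ncard_A0 hs]

/-- For `0 ≤ u ≤ ν/2` and integers `-s^(2u+1) < t_1 < ⋯ < t_(m-1) ≤ -1`, the
translates `t_v + A^0(u)` are pairwise disjoint, each disjoint from `H`, and
their union has exactly `(m-1)·s^(ν/2-u)` elements. -/
theorem stmt11 (s ν : ℕ) (hs : 2 ≤ s) (hν : Even ν) (hν0 : 0 < ν)
    (u : ℕ) (hu : u ≤ ν / 2) (m : ℕ) (t : ℕ → ℤ)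
    (hmono : ∀ v w, 1 ≤ v → v < w → w ≤ m - 1 → t v < t w)
    (hbd : ∀ v, 1 ≤ v → v ≤ m - 1 → -(s ^ (2 * u + 1) : ℤ) < t v ∧ t v ≤ -1) :
    (∀ v w, 1 ≤ v → v ≤ m - 1 → 1 ≤ w → w ≤ m - 1 → v ≠ w →
      ((fun x : ℤ => t v + x) '' A0 s ν u) ∩ ((fun x : ℤ => t w + x) '' A0 s ν u) = ∅) ∧
    (∀ v, 1 ≤ v → v ≤ m - 1 →
      ((fun x : ℤ => t v + x) '' A0 s ν u) ∩ HZ s ν = ∅) ∧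
    (⋃ v ∈ Set.Icc 1 (m - 1), (fun x : ℤ => t v + x) '' A0 s ν u).ncard
      = (m - 1) * s ^ (ν / 2 - u) := by
  obtain ⟨hdisj, hH, hcard⟩ := stmt11_general (ν := ν) (two_pos.trans_le hs) hu
    (StrictMonoOn.injOn fun v hv w hw hvw => hmono v w hv.1 hvw hw.2)
    (fun v (hv : v ∈ Set.Icc 1 (m - 1)) => hbd v hv.1 hv.2)
  exact ⟨fun v w hv hv' hw hw' hvw => (hdisj ⟨hv, hv'⟩ ⟨hw, hw'⟩ hvw).inter_eq,
    fun v hv hv' => (hH v ⟨hv, hv'⟩).inter_eq, by simpa using hcard⟩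
end
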